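/- arXiv:0907.4728 — 3 statements merged into one kernel-verified Lean document; each statement's English description precedes it below -/
import Mathlib

section
/- When the V blocks have exactly the same size n/V, the corrected V-fold cross-validation criterion of Burman equals the empirical risk plus the V-fold penalty: for arbitrary points ξ_1,…,ξ_n ∈ Ξ, any map γ : S × Ξ → ℝ, any algorithm A, and any partition A_1,…,A_V of {1,…,n} with card(A_j) = n/V for every j, one has L̂^VF(A;D_n;(A_j)) + L(A(D_n);P_n) − (1/V) Σ_{j=1}^V L(A(D_n^{(−A_j)});P_n) = L(A(D_n);P_n) + pen_VF(A;D_n), where pen_VF(A;D_n) = ((V−1)/V) Σ_{j=1}^V [ L(A(D_n^{(−A_j)});P_n) − L(A(D_n^{(−A_j)});P_n^{(−A_j)}) ]. -/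
open Finset

/-- The estimator trained on the subsample of `D` indexed by the subset `I`. -/
noncomputable def fitOn {Ξ S : Type*} (A : (m : ℕ) → (Fin m → Ξ) → S) {n : ℕ}
    (D : Fin n → Ξ) (I : Finset (Fin n)) : S :=
  A I.card fun k => D (I.orderIsoOfFin rfl k)

/-- The empirical loss `L(t; Q_I)` of `t` on the subsample of `D` indexed by `I`:
the average of the contrast values `γ(t; ξ_i)` for `i ∈ I`.  For `I = univ` this is
`L(t; P_n)`, and for `I = Blᶜ` this is `L(t; P_n^{(−Bl)})`. -/
noncomputable def empLoss {Ξ S : Type*} (γ : S → Ξ → ℝ) {n : ℕ}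
    (D : Fin n → Ξ) (t : S) (I : Finset (Fin n)) : ℝ :=
  ((I.card : ℝ))⁻¹ * ∑ i ∈ I, γ t (D i)

theorem empLoss_key {Ξ S : Type*} (γ : S → Ξ → ℝ) {n V m : ℕ} (hV : 0 < V) (hm : 0 < m)
    (hnV : n = V * m) (D : Fin n → Ξ) (t : S) (B : Finset (Fin n)) (hB : B.card = m) :
    empLoss γ D t B - empLoss γ D t Finset.univ
      = ((V : ℝ) - 1) * (empLoss γ D t Finset.univ - empLoss γ D t Bᶜ) := by
  have hC : ((Bᶜ).card : ℝ) = ((V : ℝ) - 1) * m := by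
    have h := Finset.card_add_card_compl B
    rw [Fintype.card_fin, hB] at h
    have h' : (m : ℝ) + ((Bᶜ).card : ℝ) = V * m := by
      exact_mod_cast h.trans hnV
    linarith
  have hU : ((Finset.univ : Finset (Fin n)).card : ℝ) = V * m := by
    rw [Finset.card_univ, Fintype.card_fin, hnV]
    push_cast
    ring
  have hs := Finset.sum_add_sum_compl B (fun i => γ t (D i))
  have hm' : (m : ℝ) ≠ 0 := by positivity
  have hV' : (V : ℝ) ≠ 0 := by positivity
  unfold empLoss
  rw [hU, hC, hB, ← hs]
  by_cases h1 : (V : ℝ) - 1 = 0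
  · have hc0 : Bᶜ = ∅ := by
      rw [← Finset.card_eq_zero]
      rw [h1, zero_mul] at hC
      exact_mod_cast hC
    have hV1 : (V : ℝ) = 1 := by linarith
    rw [hc0, hV1]
    simp
  · field_simp
    ring

/-- When the `V` blocks have exactly the same size `n/V`, the corrected
V-fold cross-validation criterion of Burman equals the empirical risk plus the V-fold
penalty: `L̂^VF + L(A(D_n); P_n) − (1/V) Σ_j L(A(D_n^{(−A_j)}); P_n)`
`= L(A(D_n); P_n) + pen_VF(A; D_n)` where
`pen_VF(A; D_n) = ((V−1)/V) Σ_j [L(A(D_n^{(−A_j)}); P_n) − L(A(D_n^{(−A_j)}); P_n^{(−A_j)})]`. -/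
theorem stmt10 {Ξ S : Type*} (γ : S → Ξ → ℝ) (A : (m : ℕ) → (Fin m → Ξ) → S)
    {n V : ℕ} (hV : 0 < V) (hn : 0 < n) (hdvd : V ∣ n)
    (D : Fin n → Ξ) (Bl : Fin V → Finset (Fin n))
    (hpart : ∀ i : Fin n, ∃! j : Fin V, i ∈ Bl j)
    (hsize : ∀ j, (Bl j).card = n / V) :
    -- corrected V-fold CV criterion
    (((V : ℝ))⁻¹ * ∑ j, empLoss γ D (fitOn A D (Bl j)ᶜ) (Bl j))
        + empLoss γ D (fitOn A D Finset.univ) Finset.univ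
        - ((V : ℝ))⁻¹ * ∑ j, empLoss γ D (fitOn A D (Bl j)ᶜ) Finset.univ
      -- equals empirical risk plus the V-fold penalty
      = empLoss γ D (fitOn A D Finset.univ) Finset.univ
        + ((V : ℝ) - 1) / (V : ℝ) *
            ∑ j, (empLoss γ D (fitOn A D (Bl j)ᶜ) Finset.univ
              - empLoss γ D (fitOn A D (Bl j)ᶜ) (Bl j)ᶜ) := by
  obtain ⟨m, hm⟩ := hdvd
  have hmpos : 0 < m := by
    rcases Nat.eq_zero_or_pos m with h | h
    · simp [h] at hm
      omega
    · exact h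
  have hdiv : n / V = m := by rw [hm, Nat.mul_div_cancel_left _ hV]
  have key : ∑ j, empLoss γ D (fitOn A D (Bl j)ᶜ) (Bl j)
      - ∑ j, empLoss γ D (fitOn A D (Bl j)ᶜ) Finset.univ
      = ((V : ℝ) - 1) * ∑ j, (empLoss γ D (fitOn A D (Bl j)ᶜ) Finset.univ
              - empLoss γ D (fitOn A D (Bl j)ᶜ) (Bl j)ᶜ) := by
    rw [← Finset.sum_sub_distrib, Finset.mul_sum]
    exact Finset.sum_congr rfl fun j _ =>
      empLoss_key γ hV hmpos hm D _ (Bl j) ((hsize j).trans hdiv)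
  rw [div_eq_inv_mul, mul_assoc, ← key]
  ring
end

section
/- Closed-form formula for the leave-one-out estimator of the quadratic risk of a histogram density estimator: let μ be a σ-finite measure on a measurable space Ξ, let (I_λ)_{λ∈Λ} be a finite measurable partition of Ξ with 0 < μ(I_λ) < ∞ for every λ, and let n ≥ 2 and ξ_1,…,ξ_n ∈ Ξ be arbitrary points with bin counts n_λ = card{i : ξ_i ∈ I_λ}. Then the leave-one-out estimator (1/n) Σ_{j=1}^n γ(ŝ_{D_n^{(−j)}}; ξ_j) equals Σ_{λ∈Λ} n_λ (2n − 1 − n·n_λ) / ( n (n−1)² μ(I_λ) ). -/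
open MeasureTheory Finset

/-- The histogram density estimator with respect to `μ`, built on the partition
`(Ip l)_{l ∈ Λ}`, from a sample of size `N` with bin counts `cnt`. -/
noncomputable def histogram {Ξ Λ : Type*} [MeasurableSpace Ξ] [Fintype Λ]
    (μ : Measure Ξ) (Ip : Λ → Set Ξ) (N : ℕ) (cnt : Λ → ℕ) : Ξ → ℝ :=
  fun x => ∑ l, (cnt l : ℝ) / ((N : ℝ) * (μ (Ip l)).toReal)
    * Set.indicator (Ip l) (fun _ => (1 : ℝ)) x

theorem hist_sq_aux {Ξ Λ : Type*} [Fintype Λ]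
    (Ip : Λ → Set Ξ) (hdisj : Pairwise (Function.onFun Disjoint Ip)) (a : Λ → ℝ) (x : Ξ) :
    (∑ l, a l * Set.indicator (Ip l) (fun _ => (1 : ℝ)) x) ^ 2
      = ∑ l, Set.indicator (Ip l) (fun _ => (a l) ^ 2) x := by
  classical
  rw [sq, Finset.sum_mul_sum]
  refine Finset.sum_congr rfl fun i _ => ?_
  rw [Finset.sum_eq_single i]
  · by_cases h : x ∈ Ip i <;> simp [h, sq]
  · intro j _ hj
    by_cases h : x ∈ Ip i
    · have : x ∉ Ip j := fun h' => Set.disjoint_left.1 (hdisj hj) h' h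
      simp [this]
    · simp [h]
  · simp

theorem hist_int_aux {Ξ Λ : Type*} [MeasurableSpace Ξ] [Fintype Λ]
    (μ : Measure Ξ) (Ip : Λ → Set Ξ) (hmeas : ∀ l, MeasurableSet (Ip l))
    (hdisj : Pairwise (Function.onFun Disjoint Ip))
    (hfin : ∀ l, μ (Ip l) < ⊤) (N : ℕ) (cnt : Λ → ℕ) :
    ∫ x, (histogram μ Ip N cnt x) ^ 2 ∂μ
      = ∑ l, ((cnt l : ℝ) / ((N : ℝ) * (μ (Ip l)).toReal)) ^ 2 * (μ (Ip l)).toReal := by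
  unfold histogram
  simp_rw [hist_sq_aux Ip hdisj]
  rw [integral_finsetSum]
  · refine Finset.sum_congr rfl fun l _ => ?_
    rw [integral_indicator_const _ (hmeas l)]
    simp [Measure.real, mul_comm]
  · intro l _
    exact (integrable_indicator_iff (hmeas l)).2 (integrableOn_const (hfin l).ne)

/-- Closed-form formula for the leave-one-out estimator of the
quadratic risk of a histogram density estimator: for a finite measurable partition
`(Ip l)` of `Ξ` with `0 < μ(Ip l) < ∞`, `n ≥ 2` arbitrary points `ξ_1, …, ξ_n` with bin
counts `n_l`, and the quadratic-risk contrast `γ(t; x) = ∫ t² dμ − 2 t(x)`, the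
leave-one-out estimator `(1/n) Σ_j γ(ŝ_{D_n^{(−j)}}; ξ_j)` equals
`Σ_l n_l (2n − 1 − n n_l) / (n (n−1)² μ(Ip l))`. -/
theorem stmt14 {Ξ Λ : Type*} [MeasurableSpace Ξ] [Fintype Λ]
    (μ : Measure Ξ) [SigmaFinite μ]
    (Ip : Λ → Set Ξ) (hmeas : ∀ l, MeasurableSet (Ip l))
    (hdisj : Pairwise (Function.onFun Disjoint Ip))
    (hcover : (⋃ l, Ip l) = Set.univ)
    (hpos : ∀ l, 0 < μ (Ip l)) (hfin : ∀ l, μ (Ip l) < ⊤)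
    {n : ℕ} (hn : 2 ≤ n) (ξ : Fin n → Ξ)
    [∀ l, DecidablePred (· ∈ Ip l)] :
    ((n : ℝ))⁻¹ * ∑ j : Fin n,
        ((∫ x, (histogram μ Ip (n - 1)
            (fun l => ((Finset.univ.erase j).filter fun i => ξ i ∈ Ip l).card) x) ^ 2 ∂μ)
          - 2 * histogram μ Ip (n - 1)
              (fun l => ((Finset.univ.erase j).filter fun i => ξ i ∈ Ip l).card) (ξ j))
      = ∑ l, ((Finset.univ.filter fun i => ξ i ∈ Ip l).card : ℝ)
          * (2 * (n : ℝ) - 1 - (n : ℝ) * ((Finset.univ.filter fun i => ξ i ∈ Ip l).card : ℝ))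
          / ((n : ℝ) * ((n : ℝ) - 1) ^ 2 * (μ (Ip l)).toReal) := by
  classical
  simp_rw [hist_int_aux μ Ip hmeas hdisj hfin]
  unfold histogram
  simp_rw [Finset.mul_sum, ← Finset.sum_sub_distrib]
  simp_rw [Finset.mul_sum]
  rw [Finset.sum_comm]
  refine Finset.sum_congr rfl fun l _ => ?_
  have hm : (μ (Ip l)).toReal ≠ 0 := (ENNReal.toReal_pos (hpos l).ne' (hfin l).ne).ne'
  have hn2 : (2 : ℝ) ≤ n := by exact_mod_cast hn
  have hn0 : (n : ℝ) ≠ 0 := by linarith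
  have hn1 : (n : ℝ) - 1 ≠ 0 := by linarith
  have hc : ((n - 1 : ℕ) : ℝ) = (n : ℝ) - 1 := by
    rw [Nat.cast_sub (by omega)]; simp
  rw [hc]
  set m := (μ (Ip l)).toReal
  set c : ℝ := ((Finset.univ.filter fun i => ξ i ∈ Ip l).card : ℝ) with hcdef
  have hterm : ∀ j : Fin n,
      (n : ℝ)⁻¹ * (((((Finset.univ.erase j).filter fun i => ξ i ∈ Ip l).card : ℝ)
        / (((n : ℝ) - 1) * m)) ^ 2 * m
        - 2 * ((((Finset.univ.erase j).filter fun i => ξ i ∈ Ip l).card : ℝ)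
        / (((n : ℝ) - 1) * m) * Set.indicator (Ip l) (fun _ => (1 : ℝ)) (ξ j)))
      = c ^ 2 / (n * (n - 1) ^ 2 * m) + (if ξ j ∈ Ip l then (1 : ℝ) else 0) *
        ((1 - 2 * c - 2 * (n - 1) * (c - 1)) / (n * (n - 1) ^ 2 * m)) := by
    intro j
    rw [Finset.filter_erase]
    by_cases h : ξ j ∈ Ip l
    · have hmem : j ∈ Finset.univ.filter fun i => ξ i ∈ Ip l := by simp [h]
      rw [Finset.cast_card_erase_of_mem hmem, ← hcdef]
      simp only [h, Set.indicator_of_mem, if_true]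
      field_simp
      ring
    · rw [Finset.erase_eq_of_notMem (by simp [h]), ← hcdef]
      simp only [h, not_false_eq_true, Set.indicator_of_notMem, if_false]
      field_simp
      ring
  rw [Finset.sum_congr rfl fun j _ => hterm j, Finset.sum_add_distrib, ← Finset.sum_mul,
    Finset.sum_boole, ← hcdef]
  simp only [Finset.sum_const, Finset.card_univ, Fintype.card_fin, nsmul_eq_mul]
  field_simp
  ring
end

section
/- Closed-form formula for the leave-one-out estimator of the risk of least-squares linear regression: let X ∈ ℝ^{n×d} be a design matrix with rows x_1ᵀ,…,x_nᵀ and Y ∈ ℝⁿ; assume XᵀX is invertible and, for every i, the leave-one-out Gram matrix Σ_{j≠i} x_j x_jᵀ is invertible (equivalently H_ii < 1 for all i, where H = X(XᵀX)⁻¹Xᵀ). Let β̂^{(−i)} be the least-squares coefficient vector computed from the data (x_j, Y_j)_{j≠i}, and ŷ = HY. Then the leave-one-out estimator of the quadratic risk satisfies (1/n) Σ_{i=1}^n (Y_i − x_iᵀ β̂^{(−i)})² = (1/n) Σ_{i=1}^n ((Y_i − ŷ_i)/(1 − H_ii))². -/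
open Finset Matrix

/-- Closed-form formula for the leave-one-out estimator of the risk of
least-squares linear regression: if `XᵀX` is invertible and, for every `i`, the
leave-one-out Gram matrix `Σ_{j≠i} x_j x_jᵀ` is invertible (equivalently `H_ii < 1` for
all `i`, where `H = X(XᵀX)⁻¹Xᵀ`), then, with `β̂^{(−i)}` the least-squares coefficients
computed from `(x_j, Y_j)_{j≠i}` and `ŷ = HY`,
`(1/n) Σ_i (Y_i − x_iᵀ β̂^{(−i)})² = (1/n) Σ_i ((Y_i − ŷ_i)/(1 − H_ii))²`. -/
theorem stmt15 {n d : ℕ} (M : Matrix (Fin n) (Fin d) ℝ) (Y : Fin n → ℝ)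
    (hinv : IsUnit (Mᵀ * M).det)
    (hinvLoo : ∀ i : Fin n,
      IsUnit (∑ j ∈ Finset.univ.erase i, vecMulVec (M j) (M j)).det)
    (hH : ∀ i : Fin n, (M * (Mᵀ * M)⁻¹ * Mᵀ) i i < 1) :
    ((n : ℝ))⁻¹ * ∑ i : Fin n,
        (Y i - M i ⬝ᵥ ((∑ j ∈ Finset.univ.erase i, vecMulVec (M j) (M j))⁻¹
            *ᵥ (∑ j ∈ Finset.univ.erase i, Y j • M j))) ^ 2
      = ((n : ℝ))⁻¹ * ∑ i : Fin n,
        ((Y i - ((M * (Mᵀ * M)⁻¹ * Mᵀ) *ᵥ Y) i)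
          / (1 - (M * (Mᵀ * M)⁻¹ * Mᵀ) i i)) ^ 2 := by
  congr 1
  refine Finset.sum_congr rfl fun i _ => ?_
  congr 1
  have h1 : (1 - (M * (Mᵀ * M)⁻¹ * Mᵀ) i i) ≠ 0 := by linarith [hH i]
  have hA : ∑ j ∈ Finset.univ.erase i, vecMulVec (M j) (M j)
      = Mᵀ * M - vecMulVec (M i) (M i) := by
    rw [eq_sub_iff_add_eq, Finset.sum_erase_add _ _ (Finset.mem_univ i)]
    ext a b
    simp [Matrix.sum_apply, Matrix.mul_apply, vecMulVec_apply]
  have hv : ∑ j ∈ Finset.univ.erase i, Y j • M j = Mᵀ *ᵥ Y - Y i • M i := by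
    rw [eq_sub_iff_add_eq, Finset.sum_erase_add _ _ (Finset.mem_univ i)]
    ext a
    simp [Matrix.mulVec, dotProduct, mul_comm]
  have hii : (M * (Mᵀ * M)⁻¹ * Mᵀ) i i = M i ⬝ᵥ ((Mᵀ * M)⁻¹ *ᵥ M i) := by
    rw [Matrix.mul_assoc, Matrix.mul_apply_eq_vecMul, ← Matrix.mul_apply_eq_vecMul]
    rfl
  have hy : ((M * (Mᵀ * M)⁻¹ * Mᵀ) *ᵥ Y) i = M i ⬝ᵥ ((Mᵀ * M)⁻¹ *ᵥ (Mᵀ *ᵥ Y)) := by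
    rw [← Matrix.mulVec_mulVec, ← Matrix.mulVec_mulVec]
    rfl
  have hu := hinvLoo i
  set b := (∑ j ∈ Finset.univ.erase i, vecMulVec (M j) (M j))⁻¹
            *ᵥ (∑ j ∈ Finset.univ.erase i, Y j • M j) with hb
  have hAb : (∑ j ∈ Finset.univ.erase i, vecMulVec (M j) (M j)) *ᵥ b
      = ∑ j ∈ Finset.univ.erase i, Y j • M j := by
    rw [hb, Matrix.mulVec_mulVec, Matrix.mul_nonsing_inv _ hu, Matrix.one_mulVec]
  clear_value b
  have hx : vecMulVec (M i) (M i) *ᵥ b = (M i ⬝ᵥ b) • M i := by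
    ext a
    simp only [Matrix.mulVec, dotProduct, vecMulVec_apply, Pi.smul_apply, smul_eq_mul,
      Finset.sum_mul]
    exact Finset.sum_congr rfl fun k _ => by ring
  rw [hA, hv, Matrix.sub_mulVec, hx] at hAb
  have hS : (Mᵀ * M) *ᵥ b = Mᵀ *ᵥ Y - (Y i - M i ⬝ᵥ b) • M i := by
    rw [sub_eq_iff_eq_add] at hAb
    rw [hAb, sub_smul]
    abel
  have hbb : b = (Mᵀ * M)⁻¹ *ᵥ (Mᵀ *ᵥ Y - (Y i - M i ⬝ᵥ b) • M i) := by
    rw [← hS, Matrix.mulVec_mulVec, Matrix.nonsing_inv_mul _ hinv, Matrix.one_mulVec]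
  have hd := congrArg (fun v => M i ⬝ᵥ v) hbb
  simp only [Matrix.mulVec_sub, Matrix.mulVec_smul, dotProduct_sub, dotProduct_smul,
    smul_eq_mul] at hd
  rw [eq_div_iff h1, hii, hy]
  linarith
end
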